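/- Let f : 2^[n] → ℝ be a non-negative submodular function with ‖f‖₂² = 2^{-n} Σ_{X⊆[n]} f(X)² = 1, and let ρ ∈ (0,1). Then, with respect to the uniform distribution over subsets of [n], there exists a multilinear polynomial p of degree at most 2/(1−ρ), i.e. a function of the form p(X) = Σ_{S⊆[n], |S| ≤ 2/(1−ρ)} c_S · ∏_{i∈S} x_i (where x_i = 1 if i ∈ X and x_i = −1 otherwise, and c_S ∈ ℝ), such that 2^{-n} Σ_{X⊆[n]} (f(X) − p(X))² ≤ (1−ρ)/(1 − e^{−2}). -/

import Mathlib

/-!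
Let `Z` be a random subset of the ground set that contains each point independently with
probability `(1 - ρ) / 2`. Along the points outside `X`, and along those inside `X`, a submodular
function lies on average above the interpolation of its two extreme values, so a non-negative
submodular `f` satisfies `𝔼 f (X ∆ Z) ≥ ((1 + ρ) / 2)² f X ≥ ρ f X`. Pairing with `f` and passing
to the Fourier side gives `∑ S, ρ ^ |S| f̂ S ² ≥ ρ ‖f‖²`. As `ρ ^ |S| ≤ e⁻²` for
`|S| > 2 / (1 - ρ)`, Markov's inequality bounds the Fourier mass in these degrees, which is the
error made by truncating the Fourier expansion.
-/

open Finset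
open scoped BigOperators symmDiff

/-- Submodular functions on a lattice. -/
def IsSubmodular {L M : Type*} [Lattice L] [Add M] [LE M] (f : L → M) : Prop :=
  ∀ a b, f (a ⊔ b) + f (a ⊓ b) ≤ f a + f b

namespace IsSubmodular

variable {L M : Type*} {f : L → M}

lemma comp_sup_left [DistribLattice L] [Add M] [LE M] (hf : IsSubmodular f) (c : L) :
    IsSubmodular fun a ↦ f (c ⊔ a) := fun a b ↦ by
  simpa only [sup_sup_distrib_left c a b, sup_inf_left] using hf (c ⊔ a) (c ⊔ b)

lemma comp_sdiff_left [GeneralizedBooleanAlgebra L] [AddCommMagma M] [LE M]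
    (hf : IsSubmodular f) (c : L) : IsSubmodular fun a ↦ f (c \ a) := fun a b ↦
  calc
    f (c \ (a ⊔ b)) + f (c \ (a ⊓ b)) = f (c \ a ⊔ c \ b) + f (c \ a ⊓ c \ b) := by
      rw [sdiff_sup, sdiff_inf, add_comm]
    _ ≤ f (c \ a) + f (c \ b) := hf _ _

end IsSubmodular

section

variable {α : Type*} [DecidableEq α]

/-- The mean of `g` over the random subset of `A` that contains each element of `A` independently
with probability `p`. -/
def randomSubsetMean (p : ℝ) (A : Finset α) (g : Finset α → ℝ) : ℝ :=
  ∑ T ∈ A.powerset, p ^ #T * (1 - p) ^ #(A \ T) * g T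

section RandomSubsetMean

variable {p : ℝ} {A B : Finset α} {g h : Finset α → ℝ}

@[simp]
lemma randomSubsetMean_empty (p : ℝ) (g : Finset α → ℝ) : randomSubsetMean p ∅ g = g ∅ := by
  simp [randomSubsetMean]

lemma randomSubsetMean_congr (hgh : ∀ T ⊆ A, g T = h T) :
    randomSubsetMean p A g = randomSubsetMean p A h :=
  sum_congr rfl fun T hT ↦ by rw [hgh T (mem_powerset.1 hT)]

lemma randomSubsetMean_mono (hp₀ : 0 ≤ p) (hp₁ : p ≤ 1) (hgh : ∀ T ⊆ A, g T ≤ h T) :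
    randomSubsetMean p A g ≤ randomSubsetMean p A h := by
  refine sum_le_sum fun T hT ↦ mul_le_mul_of_nonneg_left (hgh T (mem_powerset.1 hT)) ?_
  exact mul_nonneg (pow_nonneg hp₀ _) (pow_nonneg (sub_nonneg.2 hp₁) _)

lemma randomSubsetMean_const_mul (p c : ℝ) (A : Finset α) (g : Finset α → ℝ) :
    randomSubsetMean p A (fun T ↦ c * g T) = c * randomSubsetMean p A g := by
  simp only [randomSubsetMean, mul_sum, mul_left_comm c]

lemma randomSubsetMean_mul_const (p c : ℝ) (A : Finset α) (g : Finset α → ℝ) :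
    randomSubsetMean p A (fun T ↦ g T * c) = randomSubsetMean p A g * c := by
  simp only [randomSubsetMean, sum_mul, mul_assoc]

lemma expect_randomSubsetMean {ι : Type*} (s : Finset ι) (p : ℝ) (A : Finset α)
    (g : ι → Finset α → ℝ) :
    𝔼 i ∈ s, randomSubsetMean p A (g i) = randomSubsetMean p A fun T ↦ 𝔼 i ∈ s, g i T := by
  simp only [randomSubsetMean, expect_sum_comm, mul_expect]

lemma randomSubsetMean_insert {a : α} (ha : a ∉ A) (p : ℝ) (g : Finset α → ℝ) :
    randomSubsetMean p (insert a A) g =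
      (1 - p) * randomSubsetMean p A g + p * randomSubsetMean p A fun T ↦ g (insert a T) := by
  simp only [randomSubsetMean, sum_powerset_insert ha, mul_sum]
  congr 1 <;> refine sum_congr rfl fun T hT ↦ ?_
  all_goals have haT : a ∉ T := fun h ↦ ha (mem_powerset.1 hT h)
  · rw [insert_sdiff_of_notMem _ haT, card_insert_of_notMem (by simp [ha])]
    ring
  · rw [insert_sdiff_insert, sdiff_insert_of_notMem ha, card_insert_of_notMem haT]
    ring

lemma randomSubsetMean_union (hAB : Disjoint A B) (p : ℝ) (g : Finset α → ℝ) :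
    randomSubsetMean p (A ∪ B) g =
      randomSubsetMean p A fun S ↦ randomSubsetMean p B fun T ↦ g (S ∪ T) := by
  induction A using Finset.induction_on generalizing g with
  | empty => simp
  | insert a A ha ih =>
    obtain ⟨haB, hAB⟩ := disjoint_insert_left.1 hAB
    rw [insert_union, randomSubsetMean_insert (by simp [ha, haB]), randomSubsetMean_insert ha,
      ih hAB, ih hAB]
    simp only [insert_union]

lemma randomSubsetMean_prod (p : ℝ) (A : Finset α) (u : α → ℝ) :
    randomSubsetMean p A (fun T ↦ ∏ i ∈ T, u i) = ∏ i ∈ A, (p * u i + (1 - p)) := by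
  simp only [randomSubsetMean, prod_add, prod_mul_distrib, prod_const]
  exact sum_congr rfl fun T _ ↦ by ring

lemma IsSubmodular.le_randomSubsetMean (hg : IsSubmodular g) (hp₀ : 0 ≤ p) (hp₁ : p ≤ 1)
    (A : Finset α) : (1 - p) * g ∅ + p * g A ≤ randomSubsetMean p A g := by
  induction A using Finset.induction_on generalizing g with
  | empty => rw [randomSubsetMean_empty, ← add_mul, sub_add_cancel, one_mul]
  | insert a A ha ih =>
    have hq : 0 ≤ 1 - p := sub_nonneg.2 hp₁
    have hwithout := mul_le_mul_of_nonneg_left (ih hg) hq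
    have hwith := mul_le_mul_of_nonneg_left (ih (hg.comp_sup_left {a})) hp₀
    simp only [sup_eq_union, union_empty, ← insert_eq] at hwith
    have hcross : g (insert a A) + g ∅ ≤ g {a} + g A := by
      have := hg {a} A
      rwa [sup_eq_union, ← insert_eq, inf_eq_inter, singleton_inter_of_notMem ha] at this
    have hcross := mul_le_mul_of_nonneg_left hcross (mul_nonneg hp₀ hq)
    rw [randomSubsetMean_insert ha]
    linarith

lemma IsSubmodular.mul_empty_le_randomSubsetMean (hg : IsSubmodular g) (hg₀ : ∀ T, 0 ≤ g T)
    (hp₀ : 0 ≤ p) (hp₁ : p ≤ 1) (A : Finset α) : (1 - p) * g ∅ ≤ randomSubsetMean p A g :=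
  (le_add_of_nonneg_right <| mul_nonneg hp₀ (hg₀ A)).trans (hg.le_randomSubsetMean hp₀ hp₁ A)

end RandomSubsetMean

variable [Fintype α]

/-- The noise operator with correlation `ρ`: each point of the ground set is flipped independently
with probability `(1 - ρ) / 2`. -/
noncomputable def noiseOperator (ρ : ℝ) (f : Finset α → ℝ) (X : Finset α) : ℝ :=
  randomSubsetMean ((1 - ρ) / 2) univ fun Z ↦ f (X ∆ Z)

lemma IsSubmodular.mul_le_noiseOperator {f : Finset α → ℝ} (hf : IsSubmodular f)
    (hf₀ : ∀ X, 0 ≤ f X) {ρ : ℝ} (hρ : ρ ∈ Set.Icc (-1) 1) (X : Finset α) :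
    ρ * f X ≤ noiseOperator ρ f X := by
  obtain ⟨hρ₀, hρ₁⟩ := hρ
  set p := (1 - ρ) / 2 with hp
  have hp₀ : 0 ≤ p := by linarith
  have hp₁ : p ≤ 1 := by linarith
  have hsplit : noiseOperator ρ f X =
      randomSubsetMean p X fun S ↦ randomSubsetMean p Xᶜ fun T ↦ f (X \ S ∪ T) := by
    rw [noiseOperator, ← union_compl X, randomSubsetMean_union disjoint_compl_right]
    refine randomSubsetMean_congr fun S hS ↦ randomSubsetMean_congr fun T hT ↦ congrArg f ?_
    ext i
    have := @hS i
    have := @hT i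
    simp only [mem_symmDiff, mem_union, mem_sdiff, mem_compl] at *
    tauto
  calc
    ρ * f X ≤ ρ * f X + p ^ 2 * f X :=
      le_add_of_nonneg_right (mul_nonneg (sq_nonneg p) (hf₀ X))
    _ = (1 - p) * ((1 - p) * f X) := by
      rw [hp]
      ring
    _ ≤ (1 - p) * randomSubsetMean p X fun S ↦ f (X \ S) := by
      refine mul_le_mul_of_nonneg_left ?_ (sub_nonneg.2 hp₁)
      simpa using (hf.comp_sdiff_left X).mul_empty_le_randomSubsetMean (fun _ ↦ hf₀ _) hp₀ hp₁ X
    _ = randomSubsetMean p X fun S ↦ (1 - p) * f (X \ S) :=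
      (randomSubsetMean_const_mul ..).symm
    _ ≤ noiseOperator ρ f X := by
      rw [hsplit]
      refine randomSubsetMean_mono hp₀ hp₁ fun S _ ↦ ?_
      simpa using (hf.comp_sup_left (X \ S)).mul_empty_le_randomSubsetMean
        (fun _ ↦ hf₀ _) hp₀ hp₁ Xᶜ

/-- The parity function `∏ i ∈ S, x i` on the discrete cube, whose point `X` has the coordinates
`x i = 1` for `i ∈ X` and `x i = -1` for `i ∉ X`. -/
def parity (S X : Finset α) : ℝ :=
  ∏ i ∈ S, if i ∈ X then 1 else -1

/-- The Fourier coefficient of `f` at `S`, with respect to the uniform distribution on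
`Finset α`. -/
noncomputable def parityCoeff (f : Finset α → ℝ) (S : Finset α) : ℝ :=
  𝔼 X, f X * parity S X

section Parity

variable (f g : Finset α → ℝ) (S T X Y : Finset α)

lemma parity_compl_compl : parity Xᶜ Sᶜ = parity S X := by
  rw [parity, parity, ← Fintype.prod_ite_mem, ← Fintype.prod_ite_mem S]
  refine prod_congr rfl fun i _ ↦ ?_
  by_cases hS : i ∈ S <;> by_cases hX : i ∈ X <;> simp [hS, hX]

lemma parity_mul_parity : parity S X * parity S Y = parity S (X ∆ Y)ᶜ := by
  simp only [parity, ← prod_mul_distrib]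
  refine prod_congr rfl fun i _ ↦ ?_
  by_cases hX : i ∈ X <;> by_cases hY : i ∈ Y <;> simp [hX, hY]

lemma parity_symmDiff : parity S (X ∆ Y) = parity S X * parity S Yᶜ := by
  rw [parity_mul_parity]
  congr 1
  ext i
  simp only [mem_symmDiff, mem_compl]
  tauto

lemma sum_parity : ∑ S, parity S X = if X = univ then (2 : ℝ) ^ Fintype.card α else 0 := by
  have hprod : ∑ S, parity S X = ∏ i, (1 + if i ∈ X then (1 : ℝ) else -1) := by
    simp only [prod_one_add, powerset_univ, parity]
  rw [hprod]
  split_ifs with hX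
  · simp [hX, one_add_one_eq_two]
  · obtain ⟨i, hi⟩ := not_forall.1 (mt eq_univ_iff_forall.2 hX)
    exact prod_eq_zero (mem_univ i) (by simp [hi])

lemma sum_parity_mul_parity :
    ∑ S, parity S X * parity S Y = if X = Y then (2 : ℝ) ^ Fintype.card α else 0 := by
  simp only [parity_mul_parity, sum_parity, compl_eq_univ_iff, ← bot_eq_empty, symmDiff_eq_bot]

lemma expect_parity_mul_parity :
    𝔼 X, parity S X * parity T X = if S = T then (1 : ℝ) else 0 := by
  have hswap : ∑ X, parity S X * parity T X = ∑ X, parity X Sᶜ * parity X Tᶜ :=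
    Fintype.sum_equiv compl_involutive.toPerm _ _ fun X ↦ by
      simp only [Function.Involutive.coe_toPerm, parity_compl_compl]
  rw [Fintype.expect_eq_sum_div_card, hswap, sum_parity_mul_parity]
  simp only [compl_inj_iff, Fintype.card_finset, Nat.cast_pow, Nat.cast_ofNat]
  split_ifs <;> simp

lemma sum_parityCoeff_mul_parity : ∑ S, parityCoeff f S * parity S X = f X := by
  have hswap : ∑ S, parityCoeff f S * parity S X =
      𝔼 Y, f Y * ∑ S, parity S Y * parity S X := by
    simp only [parityCoeff, expect_mul, ← expect_sum_comm, mul_sum, mul_assoc]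
  rw [hswap, Fintype.expect_eq_sum_div_card]
  simp [sum_parity_mul_parity]

lemma expect_mul_eq_sum_parityCoeff_mul :
    𝔼 X, f X * g X = ∑ S, parityCoeff f S * parityCoeff g S := by
  calc
    𝔼 X, f X * g X = 𝔼 X, ∑ S, f X * parity S X * parityCoeff g S := by
      refine expect_congr rfl fun X _ ↦ ?_
      rw [← sum_parityCoeff_mul_parity g X, mul_sum]
      exact sum_congr rfl fun S _ ↦ by ring
    _ = ∑ S, parityCoeff f S * parityCoeff g S := by
      simp only [expect_sum_comm, parityCoeff, ← expect_mul]

lemma expect_sq_eq_sum_parityCoeff_sq : 𝔼 X, f X ^ 2 = ∑ S, parityCoeff f S ^ 2 := by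
  simpa only [sq] using expect_mul_eq_sum_parityCoeff_mul f f

lemma parityCoeff_sub_sum_mul_parity (c : Finset α → ℝ) :
    parityCoeff (fun X ↦ f X - ∑ S, c S * parity S X) T = parityCoeff f T - c T := by
  simp only [parityCoeff, sub_mul, expect_sub_distrib, sum_mul, expect_sum_comm, mul_assoc,
    ← mul_expect, expect_parity_mul_parity]
  simp

lemma expect_sq_sub_sum_mul_parity (c : Finset α → ℝ) :
    𝔼 X, (f X - ∑ S, c S * parity S X) ^ 2 = ∑ S, (parityCoeff f S - c S) ^ 2 := by
  simp only [expect_sq_eq_sum_parityCoeff_sq, parityCoeff_sub_sum_mul_parity]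

lemma randomSubsetMean_parity_compl (ρ : ℝ) :
    randomSubsetMean ((1 - ρ) / 2) univ (fun Z ↦ parity S Zᶜ) = ρ ^ #S := by
  have hswap (Z : Finset α) : parity S Zᶜ = ∏ i ∈ Z, if i ∈ Sᶜ then (1 : ℝ) else -1 := by
    rw [← parity_compl_compl, compl_compl, parity]
  simp only [hswap, randomSubsetMean_prod]
  rw [← prod_const, ← Fintype.prod_ite_mem S]
  refine prod_congr rfl fun i _ ↦ ?_
  by_cases hi : i ∈ S
  · simp only [mem_compl, hi, not_true_eq_false, if_false, if_true]
    ring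
  · simp [hi]

lemma parityCoeff_noiseOperator (ρ : ℝ) :
    parityCoeff (noiseOperator ρ f) S = ρ ^ #S * parityCoeff f S := by
  have hshift (Z : Finset α) :
      𝔼 X, f (X ∆ Z) * parity S X = parity S Zᶜ * parityCoeff f S := by
    rw [parityCoeff, mul_expect]
    refine Fintype.expect_equiv (symmDiff_left_involutive Z).toPerm _ _ fun X ↦ ?_
    rw [Function.Involutive.coe_toPerm, ← symmDiff_symmDiff_cancel_right Z X, parity_symmDiff,
      symmDiff_symmDiff_cancel_right]
    ring
  calc
    parityCoeff (noiseOperator ρ f) S =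
        randomSubsetMean ((1 - ρ) / 2) univ fun Z ↦ 𝔼 X, f (X ∆ Z) * parity S X := by
      simp only [parityCoeff, noiseOperator, ← randomSubsetMean_mul_const, expect_randomSubsetMean]
    _ = ρ ^ #S * parityCoeff f S := by
      simp only [hshift, randomSubsetMean_mul_const, randomSubsetMean_parity_compl]

lemma expect_mul_noiseOperator (ρ : ℝ) :
    𝔼 X, f X * noiseOperator ρ f X = ∑ S, ρ ^ #S * parityCoeff f S ^ 2 := by
  rw [expect_mul_eq_sum_parityCoeff_mul]
  exact sum_congr rfl fun S _ ↦ by rw [parityCoeff_noiseOperator]; ring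

end Parity

lemma IsSubmodular.mul_sum_parityCoeff_sq_le {f : Finset α → ℝ} (hf : IsSubmodular f)
    (hf₀ : ∀ X, 0 ≤ f X) {ρ : ℝ} (hρ : ρ ∈ Set.Icc (-1) 1) :
    ρ * ∑ S, parityCoeff f S ^ 2 ≤ ∑ S, ρ ^ #S * parityCoeff f S ^ 2 := by
  rw [← expect_sq_eq_sum_parityCoeff_sq, ← expect_mul_noiseOperator, mul_expect]
  refine expect_le_expect fun X _ ↦ ?_
  calc
    ρ * f X ^ 2 = f X * (ρ * f X) := by ring
    _ ≤ f X * noiseOperator ρ f X :=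
      mul_le_mul_of_nonneg_left (hf.mul_le_noiseOperator hf₀ hρ X) (hf₀ X)

lemma pow_le_exp_neg_mul {ρ : ℝ} (hρ : 0 ≤ ρ) (k : ℕ) : ρ ^ k ≤ Real.exp (-((1 - ρ) * k)) := by
  calc
    ρ ^ k ≤ Real.exp (-(1 - ρ)) ^ k :=
      pow_le_pow_left₀ hρ (by simpa using Real.one_sub_le_exp_neg (1 - ρ)) k
    _ = Real.exp (-((1 - ρ) * k)) := by rw [← Real.exp_nat_mul]; ring_nf

lemma sum_filter_two_div_lt_le {ι : Type*} {s : Finset ι} {w : ι → ℝ} (hw : ∀ i ∈ s, 0 ≤ w i)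
    {ρ : ℝ} (hρ₀ : 0 ≤ ρ) (hρ₁ : ρ < 1) {k : ι → ℕ}
    (h : ρ * ∑ i ∈ s, w i ≤ ∑ i ∈ s, ρ ^ k i * w i) :
    ∑ i ∈ s with 2 / (1 - ρ) < k i, w i ≤ (1 - ρ) / (1 - Real.exp (-2)) * ∑ i ∈ s, w i := by
  have hexp : 0 < 1 - Real.exp (-2) := sub_pos.2 (Real.exp_lt_one_iff.2 (by norm_num))
  have hpow (i : ι) : ρ ^ k i ≤ 1 := pow_le_one₀ hρ₀ hρ₁.le
  rw [div_mul_eq_mul_div, le_div_iff₀ hexp, sum_mul]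
  calc
    ∑ i ∈ s with 2 / (1 - ρ) < k i, w i * (1 - Real.exp (-2))
        ≤ ∑ i ∈ s with 2 / (1 - ρ) < k i, w i * (1 - ρ ^ k i) := by
      refine sum_le_sum fun i hi ↦ ?_
      obtain ⟨his, hi⟩ := mem_filter.1 hi
      have hk : 2 ≤ (1 - ρ) * k i := ((div_lt_iff₀' (sub_pos.2 hρ₁)).1 hi).le
      have := (pow_le_exp_neg_mul hρ₀ (k i)).trans (Real.exp_le_exp.2 (neg_le_neg hk))
      gcongr
      exact hw i his
    _ ≤ ∑ i ∈ s, w i * (1 - ρ ^ k i) :=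
      sum_le_sum_of_subset_of_nonneg (filter_subset _ _) fun i hi _ ↦
        mul_nonneg (hw i hi) (sub_nonneg.2 (hpow i))
    _ = ∑ i ∈ s, w i - ∑ i ∈ s, ρ ^ k i * w i := by
      rw [← sum_sub_distrib]
      exact sum_congr rfl fun i _ ↦ by ring
    _ ≤ (1 - ρ) * ∑ i ∈ s, w i := by linarith

theorem submodular_low_degree_approximation_uniform_general {f : Finset α → ℝ}
    (hf : IsSubmodular f) (hf₀ : ∀ X, 0 ≤ f X) {ρ : ℝ} (hρ₀ : 0 ≤ ρ) (hρ₁ : ρ < 1) :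
    ∃ c : Finset α → ℝ, (∀ S, 2 / (1 - ρ) < (#S : ℝ) → c S = 0) ∧
      𝔼 X, (f X - ∑ S, c S * parity S X) ^ 2 ≤
        (1 - ρ) / (1 - Real.exp (-2)) * 𝔼 X, f X ^ 2 := by
  refine ⟨fun S ↦ if 2 / (1 - ρ) < (#S : ℝ) then 0 else parityCoeff f S,
    fun S hS ↦ if_pos hS, ?_⟩
  have htail : ∑ S, (parityCoeff f S - if 2 / (1 - ρ) < (#S : ℝ) then 0 else parityCoeff f S) ^ 2 =
      ∑ S with 2 / (1 - ρ) < (#S : ℝ), parityCoeff f S ^ 2 := by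
    rw [sum_filter]
    exact sum_congr rfl fun S _ ↦ by split_ifs <;> ring
  rw [expect_sq_sub_sum_mul_parity, htail, expect_sq_eq_sum_parityCoeff_sq]
  exact sum_filter_two_div_lt_le (fun S _ ↦ sq_nonneg _) hρ₀ hρ₁
    (hf.mul_sum_parityCoeff_sq_le hf₀ ⟨by linarith, hρ₁.le⟩)

end

/-- **Non-negative submodular functions are approximated by low-degree polynomials
(uniform distribution).** Let `f : 2^[n] → ℝ` be non-negative submodular with
`‖f‖₂² = 2^{-n} Σ_X f(X)² = 1` and let `ρ ∈ (0,1)`. Then there is a multilinear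
polynomial `p(X) = Σ_{|S| ≤ 2/(1−ρ)} c_S ∏_{i∈S} x_i` (with `x_i = ±1` according to
membership in `X`) such that `2^{-n} Σ_X (f(X) − p(X))² ≤ (1−ρ)/(1 − e^{−2})`. -/
theorem submodular_low_degree_approximation_uniform
    (n : ℕ) (f : Finset (Fin n) → ℝ) (hf0 : ∀ S, 0 ≤ f S)
    (hsub : ∀ S T : Finset (Fin n), f (S ∪ T) + f (S ∩ T) ≤ f S + f T)
    (hnorm : ((2 : ℝ) ^ n)⁻¹ * ∑ X : Finset (Fin n), (f X) ^ 2 = 1)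
    (ρ : ℝ) (hρ : ρ ∈ Set.Ioo (0 : ℝ) 1) :
    ∃ c : Finset (Fin n) → ℝ,
      (∀ S : Finset (Fin n), 2 / (1 - ρ) < (S.card : ℝ) → c S = 0) ∧
      ((2 : ℝ) ^ n)⁻¹ *
          ∑ X : Finset (Fin n),
            (f X - ∑ S : Finset (Fin n),
              c S * ∏ i ∈ S, (if i ∈ X then (1 : ℝ) else -1)) ^ 2
        ≤ (1 - ρ) / (1 - Real.exp (-2)) := by
  obtain ⟨c, hc, h⟩ := submodular_low_degree_approximation_uniform_general hsub hf0 hρ.1.le hρ.2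
  exact ⟨c, hc, by simpa [parity, Fintype.expect_eq_sum_div_card, div_eq_inv_mul, hnorm] using h⟩
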